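/- arXiv:1004.0646 — 2 statements merged into one kernel-verified Lean document; each statement's English description precedes it below -/
import Mathlib

section
/- Let D = {(u₁, u₂) ∈ ℝ² : 0 < u₁² + u₂² < 1} and let μ be the uniform probability measure on D (normalized two-dimensional Lebesgue measure restricted to D). Define T : D → ℝ² by T(u₁, u₂) = (u₁·√(−2·ln(s)/s), u₂·√(−2·ln(s)/s)) where s = u₁² + u₂². Then the pushforward measure T_*μ equals the standard two-dimensional Gaussian measure on ℝ², i.e. the product of two Gaussian measures on ℝ each with mean 0 and variance 1. (This is the correctness of Marsaglia's polar method: a uniform sample on the punctured unit disk is transformed into a pair of independent standard Normal samples.) -/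
open MeasureTheory ProbabilityTheory

/-!
The argument follows the squared radius. A rotation-invariant measure on the plane is determined by
the law of its squared radius, the angle being uniform and independent. The squared radius is
uniform on `(0, 1)` for the uniform measure on the disk, and exponential of rate `1 / 2` for the
standard Gaussian measure. Marsaglia's map keeps the angle and sends the squared radius `s` to
`-2 log s`, and this turns the first law into the second.
-/

open Set Real
open scoped ENNReal NNReal

/-- The rotation-invariant measure on `ℝ × ℝ` whose squared Euclidean radius is distributed
according to `ν`, with an independent uniform angle. The negative part of `ν`, if any, is
moved to the origin, since `√s = 0` for `s ≤ 0`. -/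
noncomputable def isotropicMeasure (ν : Measure ℝ) : Measure (ℝ × ℝ) :=
  (ν.prod volume[|Ioo (-π) π]).map fun q => polarCoord.symm (√q.1, q.2)

lemma cond_smul_measure {Ω : Type*} [MeasurableSpace Ω] (μ : Measure Ω) (s : Set Ω) {c : ℝ≥0∞}
    (hc : c ≠ 0) (hc' : c ≠ ∞) : (c • μ)[|s] = μ[|s] := by
  simp only [ProbabilityTheory.cond]
  rw [Measure.restrict_smul, Measure.smul_apply, smul_eq_mul, smul_smul,
    ENNReal.mul_inv (.inl hc) (.inl hc'), mul_right_comm, ENNReal.inv_mul_cancel hc hc', one_mul]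

lemma lintegral_uniform_angle (f : ℝ → ℝ≥0∞) :
    ∫⁻ θ, f θ ∂volume[|Ioo (-π) π] = (ENNReal.ofReal (2 * π))⁻¹ * ∫⁻ θ in Ioo (-π) π, f θ := by
  rw [ProbabilityTheory.cond, lintegral_smul_measure, Real.volume_Ioo, sub_neg_eq_add, ← two_mul,
    smul_eq_mul]

instance isProbabilityMeasure_uniform_angle : IsProbabilityMeasure volume[|Ioo (-π) π] :=
  cond_isProbabilityMeasure_of_finite (by simp [pi_pos]) (by simp)

lemma mul_cos_sq_add_mul_sin_sq (r θ : ℝ) : (r * cos θ) ^ 2 + (r * sin θ) ^ 2 = r ^ 2 := by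
  linear_combination r ^ 2 * cos_sq_add_sin_sq θ

section Isotropic

variable {ν : Measure ℝ}

lemma lintegral_isotropicMeasure {f : ℝ × ℝ → ℝ≥0∞} (hf : Measurable f) :
    ∫⁻ p, f p ∂isotropicMeasure ν =
      ∫⁻ s, ∫⁻ θ, f (√s * cos θ, √s * sin θ) ∂volume[|Ioo (-π) π] ∂ν := by
  have hpolar : Measurable fun q : ℝ × ℝ => polarCoord.symm (√q.1, q.2) := by
    simp only [polarCoord_symm_apply]
    fun_prop
  rw [isotropicMeasure, lintegral_map hf hpolar, lintegral_prod _ (by fun_prop)]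
  simp only [polarCoord_symm_apply]

lemma isotropicMeasure_univ : isotropicMeasure ν univ = ν univ := by
  rw [← lintegral_one, lintegral_isotropicMeasure measurable_const]
  simp only [lintegral_one, measure_univ]

lemma isotropicMeasure_withDensity (hν : ∀ᵐ s ∂ν, 0 ≤ s) {h : ℝ → ℝ≥0∞} (hh : Measurable h) :
    (isotropicMeasure ν).withDensity (fun p => h (p.1 ^ 2 + p.2 ^ 2)) =
      isotropicMeasure (ν.withDensity h) := by
  refine Measure.ext_of_lintegral _ fun f hf => ?_
  rw [lintegral_withDensity_eq_lintegral_mul _ (by fun_prop) hf,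
    lintegral_isotropicMeasure (by fun_prop), lintegral_isotropicMeasure hf,
    lintegral_withDensity_eq_lintegral_mul _ hh (by fun_prop)]
  refine lintegral_congr_ae (hν.mono fun s hs => ?_)
  simp only [Pi.mul_apply, mul_cos_sq_add_mul_sin_sq, sq_sqrt hs]
  exact lintegral_const_mul _ (by fun_prop)

lemma isotropicMeasure_restrict (hν : ∀ᵐ s ∂ν, 0 ≤ s) {A : Set ℝ} (hA : MeasurableSet A) :
    (isotropicMeasure ν).restrict {p | p.1 ^ 2 + p.2 ^ 2 ∈ A} =
      isotropicMeasure (ν.restrict A) := by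
  have hA' : MeasurableSet {p : ℝ × ℝ | p.1 ^ 2 + p.2 ^ 2 ∈ A} :=
    hA.preimage (f := fun p : ℝ × ℝ => p.1 ^ 2 + p.2 ^ 2) (by fun_prop)
  rw [← withDensity_indicator_one hA, ← withDensity_indicator_one hA',
    ← isotropicMeasure_withDensity hν (measurable_one.indicator hA)]
  rfl

lemma isotropicMeasure_cond (hν : ∀ᵐ s ∂ν, 0 ≤ s) {A : Set ℝ} (hA : MeasurableSet A) :
    (isotropicMeasure ν)[|{p | p.1 ^ 2 + p.2 ^ 2 ∈ A}] = isotropicMeasure ν[|A] := by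
  have hmass : isotropicMeasure ν {p | p.1 ^ 2 + p.2 ^ 2 ∈ A} = ν A := by
    rw [← Measure.restrict_apply_univ, isotropicMeasure_restrict hν hA, isotropicMeasure_univ,
      Measure.restrict_apply_univ]
  simp only [ProbabilityTheory.cond]
  rw [hmass, isotropicMeasure_restrict hν hA, isotropicMeasure, isotropicMeasure,
    Measure.prod_smul_left, Measure.map_smul]

lemma map_mul_isotropicMeasure {c : ℝ → ℝ} (hc : Measurable c) (hc₀ : ∀ s, 0 ≤ c s) :
    (isotropicMeasure ν).map
        (fun p => (p.1 * c (p.1 ^ 2 + p.2 ^ 2), p.2 * c (p.1 ^ 2 + p.2 ^ 2))) =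
      isotropicMeasure (ν.map fun s => s * c s ^ 2) := by
  refine Measure.ext_of_lintegral _ fun f hf => ?_
  rw [lintegral_map hf (by fun_prop), lintegral_isotropicMeasure (by fun_prop),
    lintegral_isotropicMeasure hf, lintegral_map (by fun_prop) (by fun_prop)]
  refine lintegral_congr fun s => lintegral_congr fun θ => ?_
  have hradius : √s * c (√s ^ 2) = √(s * c s ^ 2) := by
    rw [sqrt_mul' _ (sq_nonneg _), sqrt_sq (hc₀ s)]
    rcases le_total 0 s with hs | hs
    · rw [sq_sqrt hs]
    · simp only [sqrt_eq_zero_of_nonpos hs, zero_mul]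
  simp only [mul_cos_sq_add_mul_sin_sq]
  rw [mul_right_comm _ (cos θ), mul_right_comm _ (sin θ), hradius]

end Isotropic

lemma lintegral_Ioi_comp_sqrt (g : ℝ → ℝ≥0∞) :
    ∫⁻ s in Ioi 0, g (√s) = ∫⁻ r in Ioi 0, ENNReal.ofReal (2 * r) * g r := by
  have himage : (fun r : ℝ => r ^ 2) '' Ioi 0 = Ioi 0 := by
    ext s
    exact ⟨fun ⟨r, hr, hrs⟩ => hrs ▸ pow_pos (mem_Ioi.1 hr) 2,
      fun hs => ⟨√s, sqrt_pos.2 hs, sq_sqrt (le_of_lt hs)⟩⟩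
  have hderiv (r : ℝ) (_ : r ∈ Ioi 0) : HasDerivWithinAt (fun r => r ^ 2) (2 * r) (Ioi 0) r := by
    simpa using (hasDerivAt_pow 2 r).hasDerivWithinAt
  have hinj : InjOn (fun r : ℝ => r ^ 2) (Ioi 0) := fun _ ha _ hb =>
    (pow_left_inj₀ (le_of_lt ha) (le_of_lt hb) two_ne_zero).1
  conv_lhs =>
    rw [← himage, lintegral_image_eq_lintegral_abs_deriv_mul measurableSet_Ioi hderiv hinj]
  refine setLIntegral_congr_fun measurableSet_Ioi fun r (hr : 0 < r) => ?_
  simp only [sqrt_sq hr.le, abs_of_pos (mul_pos two_pos hr)]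

/-- The factor `π` arises because a disk of squared radius `s` has area `π s`. -/
lemma volume_eq_isotropicMeasure :
    (volume : Measure (ℝ × ℝ)) =
      isotropicMeasure (ENNReal.ofReal π • volume.restrict (Ioi 0)) := by
  refine Measure.ext_of_lintegral _ fun f hf => ?_
  have hconst (r : ℝ) : ENNReal.ofReal π * (ENNReal.ofReal (2 * r) * (ENNReal.ofReal (2 * π))⁻¹) =
      ENNReal.ofReal r := by
    rw [← ENNReal.ofReal_inv_of_pos (by positivity), ← ENNReal.ofReal_mul' (by positivity),
      ← ENNReal.ofReal_mul pi_pos.le]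
    congr 1
    field_simp
  calc ∫⁻ p, f p
    _ = ∫⁻ r in Ioi 0, ∫⁻ θ in Ioo (-π) π, ENNReal.ofReal r * f (r * cos θ, r * sin θ) := by
      rw [← lintegral_comp_polarCoord_symm, polarCoord_target, Measure.volume_eq_prod,
        ← Measure.prod_restrict]
      simp only [polarCoord_symm_apply, smul_eq_mul]
      rw [lintegral_prod _ (by fun_prop)]
    _ = ENNReal.ofReal π * ∫⁻ r in Ioi 0, ENNReal.ofReal (2 * r) *
          ∫⁻ θ, f (r * cos θ, r * sin θ) ∂volume[|Ioo (-π) π] := by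
      rw [← lintegral_const_mul _ (by fun_prop)]
      refine lintegral_congr fun r => ?_
      rw [lintegral_const_mul _ (by fun_prop), lintegral_uniform_angle, ← hconst]
      ring
    _ = ∫⁻ p, f p ∂isotropicMeasure (ENNReal.ofReal π • volume.restrict (Ioi 0)) := by
      rw [lintegral_isotropicMeasure hf, lintegral_smul_measure, smul_eq_mul,
        ← lintegral_Ioi_comp_sqrt fun r => ∫⁻ θ, f (r * cos θ, r * sin θ) ∂volume[|Ioo (-π) π]]

lemma ae_nonneg_smul_volume_restrict_Ioi (c : ℝ≥0∞) :
    ∀ᵐ s ∂(c • volume.restrict (Ioi (0 : ℝ))), 0 ≤ s :=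
  Measure.ae_smul_measure ((ae_restrict_mem measurableSet_Ioi).mono fun _ => le_of_lt) c

lemma volume_cond_eq_isotropicMeasure {A : Set ℝ} (hA : MeasurableSet A) (hpos : A ⊆ Ioi 0) :
    volume[|{p : ℝ × ℝ | p.1 ^ 2 + p.2 ^ 2 ∈ A}] = isotropicMeasure volume[|A] := by
  have hcond : (volume.restrict (Ioi 0))[|A] = volume[|A] := by
    simp only [ProbabilityTheory.cond, Measure.restrict_restrict_of_subset hpos,
      Measure.restrict_eq_self volume hpos]
  rw [volume_eq_isotropicMeasure,
    isotropicMeasure_cond (ae_nonneg_smul_volume_restrict_Ioi _) hA,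
    cond_smul_measure _ _ (ENNReal.ofReal_pos.2 pi_pos).ne' ENNReal.ofReal_ne_top, hcond]

lemma expMeasure_eq_withDensity_restrict (r : ℝ) :
    expMeasure r =
      (volume.restrict (Ioi 0)).withDensity fun x => ENNReal.ofReal (r * exp (-(r * x))) := by
  rw [restrict_Ioi_eq_restrict_Ici, ← withDensity_indicator measurableSet_Ici]
  change volume.withDensity (exponentialPDF r) = _
  congr 1
  ext x
  by_cases hx : 0 ≤ x <;> simp [exponentialPDF_eq, hx]

lemma gaussianPDF_mul_gaussianPDF (v : ℝ≥0) (x y : ℝ) :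
    gaussianPDF 0 v x * gaussianPDF 0 v y =
      ENNReal.ofReal ((2 * π * v)⁻¹ * exp (-((x ^ 2 + y ^ 2) / (2 * v)))) := by
  rw [gaussianPDF, gaussianPDF, ← ENNReal.ofReal_mul (gaussianPDFReal_nonneg _ _ _)]
  simp only [gaussianPDFReal, sub_zero]
  rw [mul_mul_mul_comm, ← exp_add, ← mul_inv, mul_self_sqrt (by positivity), ← add_div, ← neg_add,
    neg_div]

lemma gaussianReal_prod_gaussianReal_eq_isotropicMeasure {v : ℝ≥0} (hv : v ≠ 0) :
    (gaussianReal 0 v).prod (gaussianReal 0 v) = isotropicMeasure (expMeasure (2 * v)⁻¹) := by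
  have hdensity : Measurable fun s : ℝ =>
      ENNReal.ofReal ((2 * π * v)⁻¹ * exp (-(s / (2 * v)))) := by fun_prop
  have hexp : (ENNReal.ofReal π • volume.restrict (Ioi 0)).withDensity
        (fun s => ENNReal.ofReal ((2 * π * v)⁻¹ * exp (-(s / (2 * v))))) =
      expMeasure (2 * v)⁻¹ := by
    rw [withDensity_smul_measure, ← withDensity_smul _ hdensity,
      expMeasure_eq_withDensity_restrict]
    congr 1
    ext s
    rw [Pi.smul_apply, smul_eq_mul, ← ENNReal.ofReal_mul pi_pos.le]
    congr 1
    field_simp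
  rw [gaussianReal_of_var_ne_zero 0 hv,
    prod_withDensity (measurable_gaussianPDF 0 v) (measurable_gaussianPDF 0 v),
    ← Measure.volume_eq_prod, volume_eq_isotropicMeasure]
  simp only [gaussianPDF_mul_gaussianPDF]
  rw [isotropicMeasure_withDensity (ae_nonneg_smul_volume_restrict_Ioi _) hdensity, hexp]

lemma map_neg_log_div_uniform {r : ℝ} (hr : 0 < r) :
    volume[|Ioo 0 1].map (fun u => -log u / r) = expMeasure r := by
  have : IsProbabilityMeasure (expMeasure r) := isProbabilityMeasure_expMeasure hr
  have huniform : volume[|Ioo (0 : ℝ) 1] = volume.restrict (Ioo 0 1) := by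
    simp [ProbabilityTheory.cond]
  refine Measure.ext_of_Iic _ _ fun x => ?_
  have hpreimage : (fun u => -log u / r) ⁻¹' Iic x ∩ Ioo 0 1 = Ico (exp (-(r * x))) 1 := by
    ext u
    have hiff (hu : 0 < u) : -log u / r ≤ x ↔ exp (-(r * x)) ≤ u := by
      rw [div_le_iff₀ hr, ← le_log_iff_exp_le hu, neg_le, mul_comm]
    exact ⟨fun ⟨hux, hu₀, hu₁⟩ => ⟨(hiff hu₀).1 hux, hu₁⟩, fun ⟨hux, hu₁⟩ =>
      have hu₀ := (exp_pos _).trans_le hux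
      ⟨(hiff hu₀).2 hux, hu₀, hu₁⟩⟩
  rw [huniform, Measure.map_apply (by fun_prop) measurableSet_Iic,
    Measure.restrict_apply (measurableSet_Iic.preimage (by fun_prop)), hpreimage,
    Real.volume_Ico, ← ofReal_cdf, cdf_expMeasure_eq hr]
  split_ifs with hx
  · rfl
  · rw [ENNReal.ofReal_zero, ENNReal.ofReal_eq_zero, sub_nonpos, one_le_exp_iff, neg_nonneg]
    exact mul_nonpos_of_nonneg_of_nonpos hr.le (not_le.1 hx).le

/-- **Correctness of Marsaglia's polar method.** Let `D` be the punctured open unit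
disk in `ℝ²` and let `μ` be the uniform probability measure on `D` (normalized
Lebesgue measure restricted to `D`). The map
`T(u₁,u₂) = (u₁√(−2 ln s / s), u₂√(−2 ln s / s))` with `s = u₁² + u₂²` pushes `μ`
forward to the standard two-dimensional Gaussian measure, i.e. the product of two
Gaussian measures on `ℝ` each with mean `0` and variance `1`. -/
theorem marsaglia_polar_method :
    let D : Set (ℝ × ℝ) := {p | 0 < p.1 ^ 2 + p.2 ^ 2 ∧ p.1 ^ 2 + p.2 ^ 2 < 1}
    let μ : Measure (ℝ × ℝ) := (volume D)⁻¹ • volume.restrict D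
    let T : ℝ × ℝ → ℝ × ℝ := fun p =>
      (p.1 * Real.sqrt (-2 * Real.log (p.1 ^ 2 + p.2 ^ 2) / (p.1 ^ 2 + p.2 ^ 2)),
       p.2 * Real.sqrt (-2 * Real.log (p.1 ^ 2 + p.2 ^ 2) / (p.1 ^ 2 + p.2 ^ 2)))
    μ.map T = (gaussianReal 0 1).prod (gaussianReal 0 1) := by
  intro D μ T
  have hradius : (fun s => s * √(-2 * log s / s) ^ 2) =ᵐ[volume[|Ioo 0 1]]
      fun s => -log s / (2 * (1 : ℝ≥0) : ℝ)⁻¹ := by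
    refine (ae_cond_mem measurableSet_Ioo).mono fun s ⟨hs₀, hs₁⟩ => ?_
    have hlog : 0 ≤ -2 * log s := by linarith [log_neg hs₀ hs₁]
    simp only [sq_sqrt (div_nonneg hlog hs₀.le), mul_div_cancel₀ _ hs₀.ne', NNReal.coe_one]
    ring
  calc μ.map T
    _ = (isotropicMeasure volume[|Ioo 0 1]).map T :=
      congrArg (Measure.map T)
        (volume_cond_eq_isotropicMeasure measurableSet_Ioo Ioo_subset_Ioi_self)
    _ = isotropicMeasure (volume[|Ioo 0 1].map fun s => s * √(-2 * log s / s) ^ 2) :=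
      map_mul_isotropicMeasure (c := fun s => √(-2 * log s / s)) (by fun_prop)
        fun _ => sqrt_nonneg _
    _ = isotropicMeasure (expMeasure (2 * (1 : ℝ≥0))⁻¹) := by
      rw [Measure.map_congr hradius, map_neg_log_div_uniform (by positivity)]
    _ = (gaussianReal 0 1).prod (gaussianReal 0 1) :=
      (gaussianReal_prod_gaussianReal_eq_isotropicMeasure one_ne_zero).symm
end

section
/- For every real z ≠ 0, z·coth(z) − 1 = 2·∑_{k=1}^∞ z²/(π²k² + z²), where the series on the right converges. (Here coth z = cosh z / sinh z.) -/
/-!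
Multiplying the Mittag-Leffler expansion `π cot (π x) - 1 / x = ∑ (1 / (x - n) + 1 / (x + n))` by
`x / 2` and setting `w = π x` expands `(w cot w - 1) / 2`. At `w = i z` one has `w cot w = z coth z`
and `w² = -z²`.
-/

section

open Complex

open scoped Real

theorem hasSum_cotTerm {x : ℂ} (hx : x ∈ integerComplement) :
    HasSum (cotTerm x) (π * cot (π * x) - 1 / x) :=
  (summable_cotTerm hx).hasSum_iff_tendsto_nat.mpr (tendsto_logDeriv_euler_cot_sub hx)

theorem div_pi_mem_integerComplement_iff {w : ℂ} :
    w / π ∈ integerComplement ↔ sin w ≠ 0 := by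
  have hπ : (π : ℂ) ≠ 0 := ofReal_ne_zero.mpr Real.pi_ne_zero
  simp only [mem_integerComplement_iff, sin_ne_zero_iff, not_exists, ne_eq,
    eq_div_iff hπ, eq_comm]

theorem div_two_mul_cotTerm {x : ℂ} (hx : x ∈ integerComplement) (k : ℕ) :
    x / 2 * cotTerm x k = x ^ 2 / (x ^ 2 - ((k : ℂ) + 1) ^ 2) := by
  rw [cotTerm_identity hx, show x ^ 2 - ((k : ℂ) + 1) ^ 2 = (x + (k + 1)) * (x - (k + 1)) by ring]
  ring

theorem hasSum_mul_cot_sub_one_div_two {w : ℂ} (hw : sin w ≠ 0) :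
    HasSum (fun k : ℕ ↦ w ^ 2 / (w ^ 2 - π ^ 2 * ((k : ℂ) + 1) ^ 2))
      ((w * cot w - 1) / 2) := by
  have hπ : (π : ℂ) ≠ 0 := ofReal_ne_zero.mpr Real.pi_ne_zero
  have hx : w / π ∈ integerComplement := div_pi_mem_integerComplement_iff.mpr hw
  have hw₀ : w ≠ 0 := by rintro rfl; simp at hw
  have hterm (k : ℕ) : w / π / 2 * cotTerm (w / π) k =
      w ^ 2 / (w ^ 2 - π ^ 2 * ((k : ℂ) + 1) ^ 2) := by
    rw [div_two_mul_cotTerm hx, ← mul_div_mul_left _ _ (pow_ne_zero 2 hπ)]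
    congr 1 <;> field_simp
  have hsum : w / π / 2 * (π * cot (π * (w / π)) - 1 / (w / π)) = (w * cot w - 1) / 2 := by
    rw [mul_div_cancel₀ w hπ]
    field_simp
  simpa only [hterm, hsum] using (hasSum_cotTerm hx).mul_left (w / π / 2)

theorem mul_I_mul_cot_mul_I (z : ℂ) :
    z * I * cot (z * I) = z * (cosh z / sinh z) := by
  rw [cot, cos_mul_I, sin_mul_I, mul_assoc, mul_div_assoc',
    mul_comm I, mul_div_mul_right _ _ I_ne_zero]

theorem coth_partial_fraction_general (z : ℂ) (hz : sinh z ≠ 0) :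
    HasSum (fun k : ℕ ↦ z ^ 2 / (π ^ 2 * ((k : ℂ) + 1) ^ 2 + z ^ 2))
      ((z * (cosh z / sinh z) - 1) / 2) := by
  have hsin : sin (z * I) ≠ 0 := by
    rw [sin_mul_I]
    exact mul_ne_zero hz I_ne_zero
  have hterm (k : ℕ) : (z * I) ^ 2 / ((z * I) ^ 2 - π ^ 2 * ((k : ℂ) + 1) ^ 2) =
      z ^ 2 / (π ^ 2 * ((k : ℂ) + 1) ^ 2 + z ^ 2) := by
    rw [mul_pow, I_sq, ← neg_div_neg_eq]
    ring
  simpa only [hterm, mul_I_mul_cot_mul_I] using hasSum_mul_cot_sub_one_div_two hsin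

end

/-- **Partial-fraction expansion of the hyperbolic cotangent.** For every real
`z ≠ 0`, the series `∑_{k≥1} z²/(π²k² + z²)` converges, with sum
`(z·coth z − 1)/2` where `coth z = cosh z / sinh z`; equivalently
`z coth z − 1 = 2 ∑_{k=1}^∞ z²/(π²k² + z²)`. -/
theorem coth_partial_fraction (z : ℝ) (hz : z ≠ 0) :
    HasSum (fun k : ℕ =>
        z ^ 2 / (Real.pi ^ 2 * ((k : ℝ) + 1) ^ 2 + z ^ 2))
      ((z * (Real.cosh z / Real.sinh z) - 1) / 2) := by
  have hsinh : Complex.sinh z ≠ 0 := by exact_mod_cast Real.sinh_ne_zero.mpr hz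
  exact_mod_cast coth_partial_fraction_general z hsinh
end
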